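/- Let (T,m) be a marked tree containing an internal vertex v₁ with mark (w₁,d₁) satisfying w₁ = d₁ + 1. Then the undotting substitution z_{w,d} ↦ D_{w,d} applied to the states-model expansion Σ_{A⊆E(T)} z_{λ(T,m,A)} of the M-polynomial produces a cancellation: there exist two monomials of opposite sign with the same underlying variable product. Conversely, if every mark of (T,m) is strict (w > d+1), the resulting expression is cancellation-free. -/

import Mathlib

open MvPolynomial

/-- The undotting substitution: the variable `z_{(w,d)}` is sent to
`D_{w,d} = ∑_{i=0}^{d} (-1)^i C(d,i) z_{(w-i,0)} z_{(1,0)}^i`. -/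
noncomputable def undot (p : ℕ × ℕ) : MvPolynomial (ℕ × ℕ) ℚ :=
  ∑ i ∈ Finset.range (p.2 + 1),
    ((-1 : ℚ) ^ i * (p.2.choose i : ℚ)) • (X (p.1 - i, 0) * X (1, 0) ^ i)

/-- The states-model expansion of the `M`-polynomial of a marked graph:
`M_{(G,m)}(z) = ∑_{A ⊆ E(G)} z_{λ(G,m,A)}`, where `λ(G,m,A)` is the multiset of
total marks (dot-sums) of the connected components of the spanning subgraph
with edge set `A`; a component with vertex set `S` has total mark
`(∑_{x∈S} w_x, ∑_{x∈S} d_x + (|S| - 1))`. -/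
noncomputable def Mpoly {V : Type*} [Fintype V] [DecidableEq V]
    (G : SimpleGraph V) [DecidableRel G.Adj] (m : V → ℕ × ℕ) :
    MvPolynomial (ℕ × ℕ) ℚ :=
  ∑ A ∈ G.edgeFinset.powerset,
    ∏ᶠ c : (SimpleGraph.fromEdgeSet (↑A : Set (Sym2 V))).ConnectedComponent,
      X ((∑ᶠ x ∈ c.supp, (m x).1),
         (∑ᶠ x ∈ c.supp, (m x).2) + (Nat.card c.supp - 1))

/-!
Measure polynomials by the sum `coeffNorm` of the absolute values of their coefficients, which is
subadditive and submultiplicative.  Since `coeffNorm D_{w,d} ≤ 2 ^ d`, expanding the undotted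
`M`-polynomial state by state bounds its norm by the number of its monomials before cancellation.

If all marks are strict, the bound is attained: `z_{1,0}` occurs in the `i`-th term of `D_{w,d}` to
the power `i` exactly, so evaluating at `z_{1,0} = -1` and at `1` for the other variables makes all
terms positive, and a polynomial is at least as large in norm as its value at such a point.

If `w₁ = d₁ + 1` at a vertex `v` with a neighbour `a`, the states `∅` and `{va}` are the products
of `D_v D_a` and `D_{v ∔ a}` with a common factor.  As the last term of `D_v` is
`± z_{1,0} ^ (d₁ + 1)`, the monomial `z_{w_a,0} z_{1,0} ^ (d₁ + 1)` occurs in both, with opposite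
signs.
-/

section CoeffNorm

variable {σ ι R : Type*} [CommRing R] [LinearOrder R]

/-- The `ℓ¹` norm of a polynomial: the sum of the absolute values of its coefficients.  It counts
the monomials, with multiplicity, that are left after cancellation. -/
def coeffNorm (p : MvPolynomial σ R) : R :=
  ∑ μ ∈ p.support, |p.coeff μ|

@[simp]
theorem coeffNorm_zero : coeffNorm (0 : MvPolynomial σ R) = 0 := by
  simp [coeffNorm]

theorem abs_eval_le_coeffNorm [IsStrictOrderedRing R] {x : σ → R} (hx : ∀ i, |x i| ≤ 1)
    (p : MvPolynomial σ R) : |eval x p| ≤ coeffNorm p := by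
  rw [eval_eq]
  refine (Finset.abs_sum_le_sum_abs _ _).trans (Finset.sum_le_sum fun μ _ ↦ ?_)
  rw [abs_mul, Finset.abs_prod]
  refine mul_le_of_le_one_right (abs_nonneg _) (Finset.prod_le_one (fun _ _ ↦ abs_nonneg _) ?_)
  exact fun i _ ↦ by rw [abs_pow]; exact pow_le_one₀ (abs_nonneg _) (hx i)

variable [IsOrderedRing R]

theorem coeffNorm_eq_sum_of_support_subset {p : MvPolynomial σ R} {s : Finset (σ →₀ ℕ)}
    (hs : p.support ⊆ s) : coeffNorm p = ∑ μ ∈ s, |p.coeff μ| :=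
  Finset.sum_subset hs fun μ _ hμ ↦ by rw [notMem_support_iff.1 hμ, abs_zero]

@[simp]
theorem coeffNorm_monomial (μ : σ →₀ ℕ) (c : R) : coeffNorm (monomial μ c) = |c| := by
  classical
  rw [coeffNorm_eq_sum_of_support_subset support_monomial_subset, Finset.sum_singleton,
    coeff_monomial, if_pos rfl]

theorem coeffNorm_nonneg (p : MvPolynomial σ R) : 0 ≤ coeffNorm p :=
  Finset.sum_nonneg fun _ _ ↦ abs_nonneg _

theorem coeffNorm_add_le (p q : MvPolynomial σ R) :
    coeffNorm (p + q) ≤ coeffNorm p + coeffNorm q := by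
  classical
  rw [coeffNorm_eq_sum_of_support_subset (support_add (p := p) (q := q)),
    coeffNorm_eq_sum_of_support_subset (p := p) Finset.subset_union_left,
    coeffNorm_eq_sum_of_support_subset (p := q) Finset.subset_union_right,
    ← Finset.sum_add_distrib]
  exact Finset.sum_le_sum fun μ _ ↦ by rw [coeff_add]; exact abs_add_le _ _

theorem coeffNorm_sum_le (s : Finset ι) (f : ι → MvPolynomial σ R) :
    coeffNorm (∑ i ∈ s, f i) ≤ ∑ i ∈ s, coeffNorm (f i) :=
  Finset.le_sum_of_subadditive coeffNorm coeffNorm_zero.le coeffNorm_add_le s f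

theorem coeffNorm_mul_le (p q : MvPolynomial σ R) :
    coeffNorm (p * q) ≤ coeffNorm p * coeffNorm q := by
  calc coeffNorm (p * q)
      = coeffNorm (∑ μ ∈ p.support, ∑ ν ∈ q.support,
          monomial (μ + ν) (p.coeff μ * q.coeff ν)) := by
        conv_lhs => rw [p.as_sum, q.as_sum, Finset.sum_mul_sum]
        simp_rw [monomial_mul]
    _ ≤ ∑ μ ∈ p.support, ∑ ν ∈ q.support, |p.coeff μ| * |q.coeff ν| := by
        refine (coeffNorm_sum_le _ _).trans (Finset.sum_le_sum fun μ _ ↦ ?_)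
        refine (coeffNorm_sum_le _ _).trans_eq (Finset.sum_congr rfl fun ν _ ↦ ?_)
        rw [coeffNorm_monomial, abs_mul]
    _ = coeffNorm p * coeffNorm q := by rw [coeffNorm, coeffNorm, Finset.sum_mul_sum]

theorem coeffNorm_prod_le (s : Finset ι) (f : ι → MvPolynomial σ R) :
    coeffNorm (∏ i ∈ s, f i) ≤ ∏ i ∈ s, coeffNorm (f i) := by
  classical
  induction s using Finset.induction_on with
  | empty => exact ((coeffNorm_monomial 0 1).trans abs_one).le
  | insert i s hi ih =>
    rw [Finset.prod_insert hi, Finset.prod_insert hi]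
    exact (coeffNorm_mul_le _ _).trans (mul_le_mul_of_nonneg_left ih (coeffNorm_nonneg _))

theorem coeffNorm_sum_lt_of_subset {s t : Finset ι} {f : ι → MvPolynomial σ R} {b : ι → R}
    (hts : t ⊆ s) (hb : ∀ i ∈ s, coeffNorm (f i) ≤ b i)
    (ht : coeffNorm (∑ i ∈ t, f i) < ∑ i ∈ t, b i) :
    coeffNorm (∑ i ∈ s, f i) < ∑ i ∈ s, b i := by
  classical
  rw [← Finset.sum_sdiff hts, ← Finset.sum_sdiff hts]
  have hrest : coeffNorm (∑ i ∈ s \ t, f i) ≤ ∑ i ∈ s \ t, b i :=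
    (coeffNorm_sum_le _ _).trans
      (Finset.sum_le_sum fun i hi ↦ hb i (Finset.mem_sdiff.1 hi).1)
  exact (coeffNorm_add_le _ _).trans_lt (add_lt_add_of_le_of_lt hrest ht)

end CoeffNorm

section Undot

/-- The dot-sum `(w, d) ∔ (w', d') = (w + w', d + d' + 1)` of two marks. -/
def dotSum (p q : ℕ × ℕ) : ℕ × ℕ :=
  (p.1 + q.1, p.2 + q.2 + 1)

/-- The `i`-th term `(-1)^i C(d,i) z_{w-i,0} z_{1,0}^i` of `D_{w,d}`, as a single monomial. -/
noncomputable def undotTerm (p : ℕ × ℕ) (i : ℕ) : MvPolynomial (ℕ × ℕ) ℚ :=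
  monomial (Finsupp.single (p.1 - i, 0) 1 + Finsupp.single (1, 0) i) ((-1) ^ i * p.2.choose i)

theorem undotTerm_eq_C_mul_X_mul_X_pow (p : ℕ × ℕ) (i : ℕ) :
    undotTerm p i = C ((-1) ^ i * p.2.choose i : ℚ) * X (p.1 - i, 0) * X (1, 0) ^ i := by
  rw [undotTerm, X_pow_eq_monomial, X, C_mul_monomial, monomial_mul, mul_one, mul_one]

theorem undot_eq_sum_undotTerm (p : ℕ × ℕ) :
    undot p = ∑ i ∈ Finset.range (p.2 + 1), undotTerm p i := by
  refine Finset.sum_congr rfl fun i _ ↦ ?_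
  rw [undotTerm_eq_C_mul_X_mul_X_pow, smul_eq_C_mul, mul_assoc]

theorem coeffNorm_undotTerm (p : ℕ × ℕ) (i : ℕ) : coeffNorm (undotTerm p i) = p.2.choose i := by
  simp [undotTerm, abs_mul]

theorem coeffNorm_undot_le (p : ℕ × ℕ) : coeffNorm (undot p) ≤ 2 ^ p.2 := by
  rw [undot_eq_sum_undotTerm]
  refine (coeffNorm_sum_le _ _).trans_eq ?_
  simp_rw [coeffNorm_undotTerm]
  exact_mod_cast Nat.sum_range_choose p.2

theorem coeffNorm_undot_sub_undotTerm_le (p : ℕ × ℕ) {i : ℕ} (hi : i ≤ p.2) :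
    coeffNorm (undot p - undotTerm p i) ≤ 2 ^ p.2 - p.2.choose i := by
  have hmem : i ∈ Finset.range (p.2 + 1) := Finset.mem_range_succ_iff.2 hi
  have hchoose : (∑ j ∈ Finset.range (p.2 + 1), p.2.choose j : ℚ) = 2 ^ p.2 := by
    exact_mod_cast Nat.sum_range_choose p.2
  rw [undot_eq_sum_undotTerm, ← hchoose, ← Finset.sum_erase_eq_sub hmem,
    ← Finset.sum_erase_eq_sub hmem]
  refine (coeffNorm_sum_le _ _).trans_eq ?_
  simp_rw [coeffNorm_undotTerm]

theorem coeffNorm_undotTerm_mul_add_undotTerm_dotSum {p : ℕ × ℕ} (hp : p.1 = p.2 + 1)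
    (q : ℕ × ℕ) :
    coeffNorm (undotTerm p p.2 * undotTerm q 0 + undotTerm (dotSum p q) (p.2 + 1)) =
      (dotSum p q).2.choose (p.2 + 1) - 1 := by
  have hexp : (Finsupp.single (p.1 - p.2, 0) 1 + Finsupp.single (1, 0) p.2 +
      (Finsupp.single (q.1 - 0, 0) 1 + Finsupp.single (1, 0) 0) : ℕ × ℕ →₀ ℕ) =
      Finsupp.single ((dotSum p q).1 - (p.2 + 1), 0) 1 + Finsupp.single (1, 0) (p.2 + 1) := by
    rw [dotSum, hp, Nat.add_sub_cancel_left, Nat.add_sub_cancel_left, Nat.sub_zero,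
      Finsupp.single_zero, Finsupp.single_add]
    abel
  have hpos : (1 : ℚ) ≤ (dotSum p q).2.choose (p.2 + 1) := by
    exact_mod_cast Nat.choose_pos (by rw [dotSum]; omega)
  have hcoeff : (-1 : ℚ) ^ p.2 * p.2.choose p.2 * ((-1) ^ 0 * q.2.choose 0) +
      (-1) ^ (p.2 + 1) * (dotSum p q).2.choose (p.2 + 1) =
      (-1) ^ p.2 * (1 - (dotSum p q).2.choose (p.2 + 1)) := by
    rw [Nat.choose_self, Nat.choose_zero_right]
    ring
  rw [undotTerm, undotTerm, undotTerm, monomial_mul, hexp, ← map_add, coeffNorm_monomial, hcoeff,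
    abs_mul, abs_neg_one_pow, one_mul, abs_sub_comm, abs_of_nonneg (sub_nonneg.2 hpos)]

theorem coeffNorm_undot_mul_undot_add_undot_dotSum_lt {p : ℕ × ℕ} (hp : p.1 = p.2 + 1)
    (q : ℕ × ℕ) :
    coeffNorm (undot p * undot q + undot (dotSum p q)) <
      2 ^ p.2 * 2 ^ q.2 + 2 ^ (dotSum p q).2 := by
  set s := undotTerm p p.2
  set t := undotTerm q 0
  set u := undotTerm (dotSum p q) (p.2 + 1)
  have hs : coeffNorm s = 1 := by simp [s, coeffNorm_undotTerm]
  have hps : coeffNorm (undot p - s) ≤ 2 ^ p.2 - 1 := by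
    simpa using coeffNorm_undot_sub_undotTerm_le p le_rfl
  have hqt : coeffNorm (undot q - t) ≤ 2 ^ q.2 - 1 := by
    simpa using coeffNorm_undot_sub_undotTerm_le q (Nat.zero_le _)
  have hu : coeffNorm (undot (dotSum p q) - u) ≤
      2 ^ (dotSum p q).2 - (dotSum p q).2.choose (p.2 + 1) :=
    coeffNorm_undot_sub_undotTerm_le _ (by rw [dotSum]; omega)
  have hstu : coeffNorm (s * t + u) = (dotSum p q).2.choose (p.2 + 1) - 1 :=
    coeffNorm_undotTerm_mul_add_undotTerm_dotSum hp q
  have hmul₁ : coeffNorm ((undot p - s) * undot q) ≤ (2 ^ p.2 - 1) * 2 ^ q.2 :=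
    (coeffNorm_mul_le _ _).trans
      (mul_le_mul hps (coeffNorm_undot_le q) (coeffNorm_nonneg _) ((coeffNorm_nonneg _).trans hps))
  have hmul₂ : coeffNorm (s * (undot q - t)) ≤ 2 ^ q.2 - 1 :=
    (coeffNorm_mul_le _ _).trans (by rwa [hs, one_mul])
  calc coeffNorm (undot p * undot q + undot (dotSum p q))
      = coeffNorm ((undot p - s) * undot q + s * (undot q - t) + (undot (dotSum p q) - u) +
          (s * t + u)) := by congr 1; ring
    _ ≤ coeffNorm ((undot p - s) * undot q) + coeffNorm (s * (undot q - t)) +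
          coeffNorm (undot (dotSum p q) - u) + coeffNorm (s * t + u) := by
        grw [coeffNorm_add_le, coeffNorm_add_le, coeffNorm_add_le]
    _ < 2 ^ p.2 * 2 ^ q.2 + 2 ^ (dotSum p q).2 := by linarith

/-- The point with `z_{1,0} = -1` and all other coordinates `1`, at which all terms of `D_{w,d}`
with `w > d + 1` are positive. -/
def signPoint (p : ℕ × ℕ) : ℚ :=
  if p = (1, 0) then -1 else 1

theorem abs_signPoint (p : ℕ × ℕ) : |signPoint p| = 1 := by
  unfold signPoint
  split_ifs <;> simp

theorem eval_signPoint_undot {p : ℕ × ℕ} (hp : p.2 + 1 < p.1) :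
    eval signPoint (undot p) = 2 ^ p.2 := by
  have hterm : ∀ i ∈ Finset.range (p.2 + 1), eval signPoint (undotTerm p i) = p.2.choose i := by
    intro i hi
    have hne : p.1 - i ≠ 1 := by
      have := Finset.mem_range.1 hi
      omega
    have hsign : (-1 : ℚ) ^ i * p.2.choose i * (-1) ^ i = p.2.choose i := by
      rw [mul_right_comm, ← mul_pow, neg_one_mul, neg_neg, one_pow, one_mul]
    have hX : eval signPoint (X (p.1 - i, 0)) = 1 := by simp [signPoint, hne]
    have hX₁ : eval signPoint (X (1, 0)) = -1 := by simp [signPoint]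
    rw [undotTerm_eq_C_mul_X_mul_X_pow, map_mul, map_mul, map_pow, eval_C, hX, hX₁, mul_one, hsign]
  rw [undot_eq_sum_undotTerm, map_sum, Finset.sum_congr rfl hterm]
  exact_mod_cast Nat.sum_range_choose p.2

end Undot

section GraphRank

variable {V : Type*} [Fintype V]

/-- The rank `|V| - k(H)` of a graph with `k(H)` connected components, that is, the number of edges
of a spanning forest.  The truncated subtraction is harmless, since `k(H) ≤ |V|`. -/
noncomputable def graphRank (H : SimpleGraph V) : ℕ :=
  Fintype.card V - Nat.card H.ConnectedComponent

theorem sum_card_supp (H : SimpleGraph V) [Fintype H.ConnectedComponent] :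
    ∑ c : H.ConnectedComponent, Nat.card c.supp = Fintype.card V := by
  classical
  rw [← Finset.card_univ, Finset.card_eq_sum_card_fiberwise (t := Finset.univ)
    (f := H.connectedComponentMk) fun _ _ ↦ Finset.mem_coe.2 (Finset.mem_univ _)]
  refine Finset.sum_congr rfl fun c _ ↦ ?_
  rw [Nat.card_eq_fintype_card, Fintype.card_subtype]
  simp_rw [SimpleGraph.ConnectedComponent.mem_supp_iff]

theorem sum_card_supp_sub_one (H : SimpleGraph V) [Fintype H.ConnectedComponent] :
    ∑ c : H.ConnectedComponent, (Nat.card c.supp - 1) = graphRank H := by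
  have hpos (c : H.ConnectedComponent) : 1 ≤ Nat.card c.supp :=
    haveI := c.nonempty_supp.to_subtype
    Nat.card_pos
  rw [Finset.sum_tsub_distrib _ fun c _ ↦ hpos c, sum_card_supp, graphRank,
    Nat.card_eq_fintype_card]
  simp

/-- Sorts the darts of a graph by connected component; darts, unlike edges, come with a vertex that
determines the component. -/
def dartEquivSigmaConnectedComponent {V : Type*} (H : SimpleGraph V) :
    H.Dart ≃ Σ c : H.ConnectedComponent, c.toSimpleGraph.Dart where
  toFun d := ⟨H.connectedComponentMk d.fst,
    ⟨(⟨d.fst, rfl⟩, ⟨d.snd, (SimpleGraph.ConnectedComponent.sound d.adj.reachable).symm⟩), d.adj⟩⟩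
  invFun p := ⟨(p.2.fst.1, p.2.snd.1), p.2.adj⟩
  left_inv _ := rfl
  right_inv := by
    rintro ⟨c, ⟨⟨x, rfl⟩, y⟩, h⟩
    rfl

open Classical in
theorem sum_card_edgeFinset_connectedComponent (H : SimpleGraph V) :
    ∑ c : H.ConnectedComponent, c.toSimpleGraph.edgeFinset.card = H.edgeFinset.card := by
  have hdart := Fintype.card_congr (dartEquivSigmaConnectedComponent H)
  simp_rw [Fintype.card_sigma, SimpleGraph.dart_card_eq_twice_card_edges, ← Finset.mul_sum] at hdart
  omega

theorem graphRank_of_isAcyclic {H : SimpleGraph V} (hH : H.IsAcyclic) [Fintype H.edgeSet] :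
    graphRank H = H.edgeFinset.card := by
  classical
  rw [← sum_card_supp_sub_one]
  trans ∑ c : H.ConnectedComponent, c.toSimpleGraph.edgeFinset.card
  · refine Finset.sum_congr rfl fun c _ ↦ ?_
    have hcard : Nat.card c.supp = Nat.card c := Nat.card_congr (Equiv.refl _)
    rw [hcard, Nat.card_eq_fintype_card, ← (hH.isTree_connectedComponent c).card_edgeFinset,
      Nat.add_sub_cancel]
  · convert sum_card_edgeFinset_connectedComponent H

theorem sum_two_pow_graphRank_of_isAcyclic {R : Type*} [CommSemiring R] {G : SimpleGraph V}
    [Fintype G.edgeSet] (hG : G.IsAcyclic) :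
    ∑ A ∈ G.edgeFinset.powerset,
        (2 : R) ^ graphRank (SimpleGraph.fromEdgeSet (A : Set (Sym2 V))) =
      3 ^ G.edgeFinset.card := by
  classical
  have hrank : ∀ A ∈ G.edgeFinset.powerset,
      graphRank (SimpleGraph.fromEdgeSet (A : Set (Sym2 V))) = A.card := by
    intro A hA
    have hAG : (A : Set (Sym2 V)) ⊆ G.edgeSet := by simpa [← Finset.coe_subset] using hA
    have hacyclic : (SimpleGraph.fromEdgeSet (A : Set (Sym2 V))).IsAcyclic :=
      hG.anti ((SimpleGraph.fromEdgeSet_le G).2 (Set.sdiff_subset.trans hAG))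
    have hedges : (SimpleGraph.fromEdgeSet (A : Set (Sym2 V))).edgeSet = A := by
      rw [SimpleGraph.edgeSet_fromEdgeSet, sdiff_eq_left, Set.disjoint_left]
      exact fun e he ↦ G.not_isDiag_of_mem_edgeSet (hAG he)
    rw [graphRank_of_isAcyclic hacyclic, SimpleGraph.edgeFinset,
      ← Set.ncard_eq_toFinset_card', hedges, Set.ncard_coe_finset]
  rw [Finset.sum_congr rfl fun A hA ↦ by rw [hrank A hA]]
  simpa only [one_pow, mul_one, two_add_one_eq_three] using
    Finset.sum_pow_mul_eq_add_pow (2 : R) 1 G.edgeFinset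

end GraphRank

section TotalMark

variable {V : Type*} (m : V → ℕ × ℕ) {H : SimpleGraph V}

/-- The total mark of a connected component: the dot-sum of the marks of its vertices. -/
noncomputable def totalMark (c : H.ConnectedComponent) : ℕ × ℕ :=
  (∑ᶠ x ∈ c.supp, (m x).1, ∑ᶠ x ∈ c.supp, (m x).2 + (Nat.card c.supp - 1))

theorem totalMark_eq_of_supp_eq {c : H.ConnectedComponent} {S : Finset V} (hS : c.supp = S) :
    totalMark m c = (∑ x ∈ S, (m x).1, ∑ x ∈ S, (m x).2 + (S.card - 1)) := by
  rw [totalMark, hS, finsum_mem_coe_finset, finsum_mem_coe_finset, Nat.card_coe_set_eq,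
    Set.ncard_coe_finset]

theorem totalMark_of_supp_eq_singleton {c : H.ConnectedComponent} {x : V}
    (hc : c.supp = {x}) : totalMark m c = m x := by
  rw [totalMark_eq_of_supp_eq m (S := {x}) (by simpa using hc)]
  simp

variable {m} in
theorem totalMark_strict [Finite V] (hm : ∀ x, (m x).2 + 1 < (m x).1) (c : H.ConnectedComponent) :
    (totalMark m c).2 + 1 < (totalMark m c).1 := by
  obtain ⟨S, hS⟩ := (Set.toFinite c.supp).exists_finset_coe
  have hcard : 0 < S.card := Finset.card_pos.2 (Finset.coe_nonempty.1 (hS ▸ c.nonempty_supp))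
  have hsum : ∑ x ∈ S, ((m x).2 + 2) ≤ ∑ x ∈ S, (m x).1 := Finset.sum_le_sum fun x _ ↦ hm x
  rw [Finset.sum_add_distrib, Finset.sum_const, smul_eq_mul] at hsum
  rw [totalMark_eq_of_supp_eq m hS.symm]
  dsimp only
  omega

theorem sum_totalMark_snd [Fintype V] [Fintype H.ConnectedComponent] :
    ∑ c : H.ConnectedComponent, (totalMark m c).2 = ∑ x, (m x).2 + graphRank H := by
  classical
  rw [← sum_card_supp_sub_one, ← Finset.sum_fiberwise (s := Finset.univ)
    (g := H.connectedComponentMk), ← Finset.sum_add_distrib]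
  refine Finset.sum_congr rfl fun c _ ↦ ?_
  have hsupp : c.supp = ({x | H.connectedComponentMk x = c} : Finset V) := by
    ext x
    simp
  rw [totalMark_eq_of_supp_eq m hsupp, hsupp, Nat.card_coe_set_eq, Set.ncard_coe_finset]

end TotalMark

section State

variable {V M : Type*} [CommMonoid M] (f : ℕ × ℕ → M) (m : V → ℕ × ℕ)

/-- The value of the monomial `z_{λ(T,m,A)}` at `z_{w,d} = f (w, d)`, where `H` is the spanning
subgraph `T|_A`. -/
noncomputable def stateMonomial (H : SimpleGraph V) : M :=
  ∏ᶠ c : H.ConnectedComponent, f (totalMark m c)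

theorem map_stateMonomial [Finite V] {N F : Type*} [CommMonoid N] [FunLike F M N]
    [MonoidHomClass F M N] (φ : F) (H : SimpleGraph V) :
    φ (stateMonomial f m H) = stateMonomial (fun p ↦ φ (f p)) m H :=
  map_finprod φ (Set.toFinite _)

theorem stateMonomial_pow_snd [Fintype V] (b : M) (H : SimpleGraph V) :
    stateMonomial (fun p ↦ b ^ p.2) m H = b ^ graphRank H * b ^ ∑ x, (m x).2 := by
  classical
  rw [stateMonomial, finprod_eq_prod_of_fintype, Finset.prod_pow_eq_pow_sum, sum_totalMark_snd,
    add_comm, pow_add]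

theorem stateMonomial_eq_prod_of_represents {H : SimpleGraph V} {S : Finset V}
    (hS : SimpleGraph.ConnectedComponent.Represents (S : Set V)
      (Set.univ : Set H.ConnectedComponent)) :
    stateMonomial f m H = ∏ x ∈ S, f (totalMark m (H.connectedComponentMk x)) := by
  rw [stateMonomial, ← finprod_mem_univ, ← finprod_mem_coe_finset]
  exact (finprod_mem_eq_of_bijOn _ hS fun _ _ ↦ rfl).symm

theorem represents_bot_univ :
    SimpleGraph.ConnectedComponent.Represents (Set.univ : Set V)
      (Set.univ : Set (⊥ : SimpleGraph V).ConnectedComponent) := by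
  refine ⟨Set.mapsTo_univ _ _, fun x _ y _ hxy ↦ ?_, fun c _ ↦ ?_⟩
  · exact SimpleGraph.reachable_bot.1 (SimpleGraph.ConnectedComponent.exact hxy)
  · obtain ⟨x, rfl⟩ := c.exists_rep
    exact ⟨x, Set.mem_univ x, rfl⟩

theorem stateMonomial_bot [Fintype V] : stateMonomial f m ⊥ = ∏ x, f (m x) := by
  rw [stateMonomial_eq_prod_of_represents f m (S := Finset.univ)
    (by rw [Finset.coe_univ]; exact represents_bot_univ)]
  refine Finset.prod_congr rfl fun x _ ↦ ?_
  rw [totalMark_of_supp_eq_singleton m (x := x)]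
  ext y
  simp

theorem reachable_edge_iff {v a x y : V} :
    (SimpleGraph.edge v a).Reachable x y ↔ x = y ∨ s(x, y) = s(v, a) := by
  constructor
  · rintro ⟨p⟩
    induction p with
    | nil => exact Or.inl rfl
    | cons h p ih =>
      rw [SimpleGraph.edge_adj] at h
      grind
  · rintro (rfl | h)
    · exact SimpleGraph.Reachable.refl _
    · by_cases hxy : x = y
      · exact hxy ▸ SimpleGraph.Reachable.refl _
      · exact SimpleGraph.Adj.reachable (by rw [SimpleGraph.edge_adj]; grind)

theorem represents_edge_compl_singleton {v a : V} (hva : v ≠ a) :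
    SimpleGraph.ConnectedComponent.Represents ({v}ᶜ : Set V)
      (Set.univ : Set (SimpleGraph.edge v a).ConnectedComponent) := by
  refine ⟨Set.mapsTo_univ _ _, fun x hx y hy hxy ↦ ?_, fun c _ ↦ ?_⟩
  · rw [Set.mem_compl_singleton_iff] at hx hy
    have := reachable_edge_iff.1 (SimpleGraph.ConnectedComponent.exact hxy)
    grind
  · obtain ⟨x, rfl⟩ := c.exists_rep
    by_cases hx : x = v
    · exact ⟨a, hva.symm, SimpleGraph.ConnectedComponent.sound (reachable_edge_iff.2 (by grind))⟩
    · exact ⟨x, hx, rfl⟩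

theorem stateMonomial_edge [Fintype V] [DecidableEq V] {v a : V} (hva : v ≠ a) :
    stateMonomial f m (SimpleGraph.edge v a) =
      f (dotSum (m v) (m a)) * ∏ x ∈ (Finset.univ.erase v).erase a, f (m x) := by
  have hpair : totalMark m ((SimpleGraph.edge v a).connectedComponentMk a) =
      dotSum (m v) (m a) := by
    rw [totalMark_eq_of_supp_eq m (S := {v, a}), Finset.sum_pair hva, Finset.sum_pair hva,
      Finset.card_pair hva, dotSum]
    ext x
    rw [SimpleGraph.ConnectedComponent.mem_supp_iff, SimpleGraph.ConnectedComponent.eq,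
      reachable_edge_iff]
    grind
  have hsingle : ∀ x ∈ (Finset.univ.erase v).erase a,
      totalMark m ((SimpleGraph.edge v a).connectedComponentMk x) = m x := by
    intro x hx
    refine totalMark_of_supp_eq_singleton m (Set.ext fun y ↦ ?_)
    rw [SimpleGraph.ConnectedComponent.mem_supp_iff, SimpleGraph.ConnectedComponent.eq,
      reachable_edge_iff]
    grind
  have ha : a ∈ Finset.univ.erase v := by simp [hva.symm]
  rw [stateMonomial_eq_prod_of_represents f m (S := Finset.univ.erase v)
    (by simpa [Set.compl_eq_univ_sdiff] using represents_edge_compl_singleton hva),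
    ← Finset.mul_prod_erase _ _ ha, hpair]
  exact congrArg _ (Finset.prod_congr rfl fun x hx ↦ congrArg f (hsingle x hx))

theorem stateMonomial_bot_add_edge {R : Type*} [CommSemiring R] (f : ℕ × ℕ → R) [Fintype V]
    [DecidableEq V] {v a : V} (hva : v ≠ a) :
    stateMonomial f m ⊥ + stateMonomial f m (SimpleGraph.edge v a) =
      (f (m v) * f (m a) + f (dotSum (m v) (m a))) *
        ∏ x ∈ (Finset.univ.erase v).erase a, f (m x) := by
  have ha : a ∈ Finset.univ.erase v := by simp [hva.symm]
  rw [stateMonomial_edge f m hva, stateMonomial_bot,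
    ← Finset.mul_prod_erase _ _ (Finset.mem_univ v), ← Finset.mul_prod_erase _ _ ha, add_mul,
    mul_assoc]

end State

section Mpoly

variable {V : Type*} [Fintype V] (m : V → ℕ × ℕ)

theorem bind₁_Mpoly [DecidableEq V] (f : ℕ × ℕ → MvPolynomial (ℕ × ℕ) ℚ) (G : SimpleGraph V)
    [DecidableRel G.Adj] :
    bind₁ f (Mpoly G m) = ∑ A ∈ G.edgeFinset.powerset,
      stateMonomial f m (SimpleGraph.fromEdgeSet (A : Set (Sym2 V))) := by
  refine (map_sum (bind₁ f) _ _).trans (Finset.sum_congr rfl fun A _ ↦ ?_)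
  refine (map_stateMonomial X m (bind₁ f) _).trans ?_
  simp_rw [bind₁_X_right]

theorem coeffNorm_stateMonomial_undot_le (H : SimpleGraph V) :
    coeffNorm (stateMonomial undot m H) ≤ 2 ^ graphRank H * 2 ^ ∑ x, (m x).2 := by
  classical
  rw [← stateMonomial_pow_snd, stateMonomial, stateMonomial, finprod_eq_prod_of_fintype,
    finprod_eq_prod_of_fintype]
  exact (coeffNorm_prod_le _ _).trans
    (Finset.prod_le_prod (fun _ _ ↦ coeffNorm_nonneg _) fun _ _ ↦ coeffNorm_undot_le _)

variable {m}

theorem eval_signPoint_stateMonomial_undot (hm : ∀ x, (m x).2 + 1 < (m x).1) (H : SimpleGraph V) :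
    eval signPoint (stateMonomial undot m H) = 2 ^ graphRank H * 2 ^ ∑ x, (m x).2 := by
  rw [map_stateMonomial, ← stateMonomial_pow_snd]
  exact finprod_congr fun c ↦ eval_signPoint_undot (totalMark_strict hm c)

theorem coeffNorm_stateMonomial_undot_bot_add_edge_lt {v a : V} (hva : v ≠ a)
    (hv : (m v).1 = (m v).2 + 1) :
    coeffNorm (stateMonomial undot m ⊥ + stateMonomial undot m (SimpleGraph.edge v a)) <
      2 ^ graphRank (⊥ : SimpleGraph V) * 2 ^ ∑ x, (m x).2 +
        2 ^ graphRank (SimpleGraph.edge v a) * 2 ^ ∑ x, (m x).2 := by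
  classical
  have hrest : coeffNorm (∏ x ∈ (Finset.univ.erase v).erase a, undot (m x)) ≤
      ∏ x ∈ (Finset.univ.erase v).erase a, 2 ^ (m x).2 :=
    (coeffNorm_prod_le _ _).trans
      (Finset.prod_le_prod (fun _ _ ↦ coeffNorm_nonneg _) fun _ _ ↦ coeffNorm_undot_le _)
  rw [← stateMonomial_pow_snd, ← stateMonomial_pow_snd, stateMonomial_bot_add_edge _ _ hva,
    stateMonomial_bot_add_edge _ _ hva]
  exact (coeffNorm_mul_le _ _).trans_lt (mul_lt_mul_of_lt_of_le_of_nonneg_of_pos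
    (coeffNorm_undot_mul_undot_add_undot_dotSum_lt hv (m a)) hrest (coeffNorm_nonneg _)
    (by positivity))

variable [DecidableEq V] {G : SimpleGraph V} [DecidableRel G.Adj]

theorem coeffNorm_bind₁_undot_Mpoly_lt {v : V} (hdeg : 0 < G.degree v)
    (hv : (m v).1 = (m v).2 + 1) :
    coeffNorm (bind₁ undot (Mpoly G m)) <
      (∑ A ∈ G.edgeFinset.powerset,
        2 ^ graphRank (SimpleGraph.fromEdgeSet (A : Set (Sym2 V)))) * 2 ^ ∑ x, (m x).2 := by
  obtain ⟨a, hva⟩ := (G.degree_pos_iff_exists_adj v).1 hdeg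
  rw [bind₁_Mpoly, Finset.sum_mul]
  refine coeffNorm_sum_lt_of_subset (t := {∅, {s(v, a)}}) ?_
    (fun A _ ↦ coeffNorm_stateMonomial_undot_le m _) ?_
  · simpa [Finset.insert_subset_iff] using hva
  · rw [Finset.sum_pair (Finset.singleton_ne_empty _).symm,
      Finset.sum_pair (Finset.singleton_ne_empty _).symm, Finset.coe_empty,
      SimpleGraph.fromEdgeSet_empty, Finset.coe_singleton]
    exact coeffNorm_stateMonomial_undot_bot_add_edge_lt hva.ne hv

theorem coeffNorm_bind₁_undot_Mpoly_eq (hm : ∀ x, (m x).2 + 1 < (m x).1) :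
    coeffNorm (bind₁ undot (Mpoly G m)) =
      (∑ A ∈ G.edgeFinset.powerset,
        2 ^ graphRank (SimpleGraph.fromEdgeSet (A : Set (Sym2 V)))) * 2 ^ ∑ x, (m x).2 := by
  rw [bind₁_Mpoly, Finset.sum_mul]
  refine ((coeffNorm_sum_le _ _).trans
    (Finset.sum_le_sum fun A _ ↦ coeffNorm_stateMonomial_undot_le m _)).antisymm ?_
  rw [← Finset.sum_congr rfl fun A _ ↦ eval_signPoint_stateMonomial_undot hm _, ← map_sum]
  exact (le_abs_self _).trans (abs_eval_le_coeffNorm (fun p ↦ (abs_signPoint p).le) _)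

end Mpoly

theorem Mpoly_undot_cancellation_iff_strict_general {V : Type*} [Fintype V] [DecidableEq V]
    (G : SimpleGraph V) [DecidableRel G.Adj] (m : V → ℕ × ℕ)
    (_hmarks : ∀ x, (m x).2 + 1 ≤ (m x).1) :
    ((∃ v, 0 < G.degree v ∧ (m v).1 = (m v).2 + 1) →
      coeffNorm (bind₁ undot (Mpoly G m)) <
        (∑ A ∈ G.edgeFinset.powerset,
          2 ^ graphRank (SimpleGraph.fromEdgeSet (A : Set (Sym2 V)))) * 2 ^ ∑ x, (m x).2) ∧
    ((∀ x, (m x).2 + 1 < (m x).1) →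
      coeffNorm (bind₁ undot (Mpoly G m)) =
        (∑ A ∈ G.edgeFinset.powerset,
          2 ^ graphRank (SimpleGraph.fromEdgeSet (A : Set (Sym2 V)))) * 2 ^ ∑ x, (m x).2) :=
  ⟨fun ⟨_, hdeg, hv⟩ ↦ coeffNorm_bind₁_undot_Mpoly_lt hdeg hv, coeffNorm_bind₁_undot_Mpoly_eq⟩

/-- Cancellation criterion for the undotting substitution on a marked tree
`(T,m)` (all marks satisfying `w ≥ d+1`).  Before cancellation, the undotted
states-model expansion has `3^{n-1} · 2^{∑_x d_x}` monomials counted with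
multiplicity and absolute coefficient value.  If `(T,m)` has an internal vertex
(degree `> 1`) whose mark satisfies `w₁ = d₁ + 1`, a cancellation occurs, i.e.
the sum of absolute values of the coefficients of the resulting polynomial is
strictly smaller than that total; conversely, if every mark is strict
(`w > d + 1`), the resulting expression is cancellation-free, i.e. the sum of
absolute values of the coefficients equals that total. -/
theorem Mpoly_undot_cancellation_iff_strict {V : Type*} [Fintype V]
    [DecidableEq V] (G : SimpleGraph V) [DecidableRel G.Adj] (hG : G.IsTree)
    (m : V → ℕ × ℕ) (hmarks : ∀ x, (m x).2 + 1 ≤ (m x).1) :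
    ((∃ v₁ : V, 1 < G.degree v₁ ∧ (m v₁).1 = (m v₁).2 + 1) →
      (∑ μ ∈ ((bind₁ undot) (Mpoly G m)).support,
          |((bind₁ undot) (Mpoly G m)).coeff μ|) <
        3 ^ (Fintype.card V - 1) * 2 ^ (∑ x : V, (m x).2)) ∧
    ((∀ x : V, (m x).2 + 1 < (m x).1) →
      (∑ μ ∈ ((bind₁ undot) (Mpoly G m)).support,
          |((bind₁ undot) (Mpoly G m)).coeff μ|) =
        3 ^ (Fintype.card V - 1) * 2 ^ (∑ x : V, (m x).2)) := by
  have h := Mpoly_undot_cancellation_iff_strict_general G m hmarks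
  rw [sum_two_pow_graphRank_of_isAcyclic hG.isAcyclic,
    Nat.eq_sub_of_add_eq hG.card_edgeFinset] at h
  exact ⟨fun ⟨v, hdeg, hv⟩ ↦ h.1 ⟨v, zero_lt_one.trans hdeg, hv⟩, h.2⟩
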